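/- arXiv:1510.07742 — 7 statements merged into one kernel-verified Lean document; each statement's English description precedes it below -/
import Mathlib

section
/- Let N ≥ 1 and let p(α) = Σ_{m=0}^{N} (a_m·cos(mα) + b_m·sin(mα)) be a trigonometric polynomial of degree at most N, and let q(α) = a_N·cos(Nα) + b_N·sin(Nα) be its top harmonic. Define the evolute operator E by (E u)(α) = u'(α − π/2). Then sup_{α ∈ ℝ} | N^{−k}·(E^k p)(α) − N^{−k}·(E^k q)(α) | → 0 as k → ∞, and for every k the function N^{−k}·(E^k q) is a pure harmonic of order N of amplitude √(a_N² + b_N²). Hence if (a_N, b_N) ≠ (0,0), the rescaled iterated evolutes of the curve with support function p converge uniformly to support functions of hypocycloids of order N. -/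
open Real Filter

/-! The evolute operator acts on the harmonic `Re (z * exp (i ω α))` by multiplying the complex
amplitude `z` by a number of modulus `|ω|`, independent of `z`. Iterating `k` times and dividing by
`Ω ^ k`, where `Ω` is the dominant frequency, scales the amplitude at every other frequency by a
factor of modulus `(|ω| / |Ω|) ^ k`, which tends to `0`, while the dominant amplitude is only
rotated. -/

/-- The evolute operator on support functions. -/
noncomputable def evolute (u : ℝ → ℝ) (α : ℝ) : ℝ := deriv u (α - π / 2)

/-- The harmonic of frequency `ω` with complex amplitude `z`. A real harmonic
`a * cos (ω * α) + b * sin (ω * α)` has amplitude `z = a - i b`. -/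
noncomputable def trigHarmonic (ω : ℝ) (z : ℂ) (α : ℝ) : ℝ :=
  (z * Complex.exp ((ω * α : ℝ) * Complex.I)).re

/-- The factor by which the evolute operator multiplies the complex amplitude of a harmonic of
frequency `ω`: differentiation contributes `i ω`, the shift by `π / 2` the exponential. -/
noncomputable def evoluteMultiplier (ω : ℝ) : ℂ :=
  ω * Complex.I * Complex.exp ((-(ω * (π / 2)) : ℝ) * Complex.I)

section Harmonics

variable (ω : ℝ) (z : ℂ) (α : ℝ)

lemma trigHarmonic_eq_cos_sin :
    trigHarmonic ω z α = z.re * cos (ω * α) + -z.im * sin (ω * α) := by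
  rw [trigHarmonic, Complex.mul_re, Complex.exp_ofReal_mul_I_re, Complex.exp_ofReal_mul_I_im]
  ring

lemma trigHarmonic_div_ofReal (c : ℝ) :
    trigHarmonic ω (z / c) α = trigHarmonic ω z α / c := by
  rw [trigHarmonic, div_mul_eq_mul_div, Complex.div_ofReal_re, trigHarmonic]

lemma abs_trigHarmonic_le : |trigHarmonic ω z α| ≤ ‖z‖ :=
  (Complex.abs_re_le_norm _).trans_eq <| by
    rw [norm_mul, Complex.norm_exp_ofReal_mul_I, mul_one]

lemma hasDerivAt_trigHarmonic :
    HasDerivAt (trigHarmonic ω z) (trigHarmonic ω (ω * Complex.I * z) α) α := by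
  have hphase : HasDerivAt (fun x : ℝ => ((ω * x : ℝ) : ℂ) * Complex.I) (ω * Complex.I) α := by
    simpa using (((hasDerivAt_id α).const_mul ω).ofReal_comp).mul_const Complex.I
  have hexp := Complex.reCLM.hasFDerivAt.comp_hasDerivAt α (hphase.cexp.const_mul z)
  refine hexp.congr_deriv (congrArg Complex.re ?_)
  ring

lemma trigHarmonic_sub (β : ℝ) :
    trigHarmonic ω z (α - β) =
      trigHarmonic ω (z * Complex.exp ((-(ω * β) : ℝ) * Complex.I)) α := by
  rw [trigHarmonic, trigHarmonic, mul_assoc, ← Complex.exp_add]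
  congr 3
  push_cast
  ring

lemma norm_evoluteMultiplier : ‖evoluteMultiplier ω‖ = |ω| := by
  rw [evoluteMultiplier, norm_mul, norm_mul, Complex.norm_exp_ofReal_mul_I, Complex.norm_I,
    Complex.norm_real, mul_one, mul_one, Real.norm_eq_abs]

end Harmonics

section Evolutes

variable {ι : Type*} (s : Finset ι) (ω : ι → ℝ) (z : ι → ℂ)

lemma evolute_sum_trigHarmonic :
    evolute (∑ i ∈ s, trigHarmonic (ω i) (z i)) =
      ∑ i ∈ s, trigHarmonic (ω i) (evoluteMultiplier (ω i) * z i) := by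
  ext α
  rw [evolute, (HasDerivAt.sum fun i _ => hasDerivAt_trigHarmonic (ω i) (z i) (α - π / 2)).deriv,
    Finset.sum_apply]
  refine Finset.sum_congr rfl fun i _ => ?_
  rw [trigHarmonic_sub, evoluteMultiplier, mul_right_comm]

lemma iterate_evolute_sum_trigHarmonic (k : ℕ) :
    evolute^[k] (∑ i ∈ s, trigHarmonic (ω i) (z i)) =
      ∑ i ∈ s, trigHarmonic (ω i) (evoluteMultiplier (ω i) ^ k * z i) := by
  induction k with
  | zero => simp only [Function.iterate_zero_apply, pow_zero, one_mul]
  | succ k ih =>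
    simp only [Function.iterate_succ_apply', ih, evolute_sum_trigHarmonic, pow_succ', mul_assoc]

lemma abs_iterate_evolute_sum_trigHarmonic_le (k : ℕ) (α : ℝ) :
    |evolute^[k] (∑ i ∈ s, trigHarmonic (ω i) (z i)) α| ≤ ∑ i ∈ s, |ω i| ^ k * ‖z i‖ := by
  rw [iterate_evolute_sum_trigHarmonic, Finset.sum_apply]
  refine (Finset.abs_sum_le_sum_abs _ _).trans (Finset.sum_le_sum fun i _ => ?_)
  refine (abs_trigHarmonic_le _ _ _).trans_eq ?_
  rw [norm_mul, norm_pow, norm_evoluteMultiplier]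

lemma tendsto_iSup_abs_iterate_evolute_sum_div_pow {Ω : ℝ} (hω : ∀ i ∈ s, |ω i| < |Ω|) :
    Tendsto (fun k : ℕ => ⨆ α, |evolute^[k] (∑ i ∈ s, trigHarmonic (ω i) (z i)) α / Ω ^ k|)
      atTop (nhds 0) := by
  have hbound (k : ℕ) (α : ℝ) : |evolute^[k] (∑ i ∈ s, trigHarmonic (ω i) (z i)) α / Ω ^ k| ≤
      ∑ i ∈ s, (|ω i| / |Ω|) ^ k * ‖z i‖ := by
    simp only [abs_div, abs_pow, div_pow, div_mul_eq_mul_div, ← Finset.sum_div]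
    gcongr
    exact abs_iterate_evolute_sum_trigHarmonic_le s ω z k α
  have hlim : Tendsto (fun k : ℕ => ∑ i ∈ s, (|ω i| / |Ω|) ^ k * ‖z i‖) atTop (nhds 0) := by
    rw [← Finset.sum_const_zero (s := s)]
    refine tendsto_finsetSum s fun i hi => ?_
    have hratio : |ω i| / |Ω| < 1 := (div_lt_one ((abs_nonneg _).trans_lt (hω i hi))).2 (hω i hi)
    simpa only [zero_mul] using
      (tendsto_pow_atTop_nhds_zero_of_lt_one (by positivity) hratio).mul_const ‖z i‖
  exact squeeze_zero (fun k => Real.iSup_nonneg fun α => abs_nonneg _)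
    (fun k => ciSup_le (hbound k)) hlim

end Evolutes

lemma iterate_evolute_trigHarmonic (ω : ℝ) (z : ℂ) (k : ℕ) :
    evolute^[k] (trigHarmonic ω z) = trigHarmonic ω (evoluteMultiplier ω ^ k * z) := by
  simpa only [Finset.sum_singleton] using
    iterate_evolute_sum_trigHarmonic {()} (fun _ => ω) (fun _ => z) k

lemma iterate_evolute_sum_trigHarmonic_sub {ι : Type*} [DecidableEq ι] (s : Finset ι)
    (ω : ι → ℝ) (z : ι → ℂ) {j : ι} (hj : j ∈ s) (k : ℕ) (α : ℝ) :
    evolute^[k] (∑ i ∈ s, trigHarmonic (ω i) (z i)) α - evolute^[k] (trigHarmonic (ω j) (z j)) α =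
      evolute^[k] (∑ i ∈ s.erase j, trigHarmonic (ω i) (z i)) α := by
  rw [iterate_evolute_sum_trigHarmonic, iterate_evolute_trigHarmonic,
    iterate_evolute_sum_trigHarmonic, ← Finset.sum_erase_add _ _ hj, Pi.add_apply,
    add_sub_cancel_right]

lemma exists_iterate_evolute_trigHarmonic_div_pow {ω : ℝ} (hω : ω ≠ 0) (z : ℂ) (k : ℕ) :
    ∃ w : ℂ, ‖w‖ = ‖z‖ ∧
      ∀ α, evolute^[k] (trigHarmonic ω z) α / ω ^ k = trigHarmonic ω w α := by
  refine ⟨evoluteMultiplier ω ^ k * z / (ω ^ k : ℝ), ?_, fun α => ?_⟩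
  · rw [norm_div, norm_mul, norm_pow, norm_evoluteMultiplier, Complex.norm_real, norm_pow,
      Real.norm_eq_abs, mul_div_cancel_left₀ _ (pow_ne_zero k (abs_ne_zero.2 hω))]
  · rw [iterate_evolute_trigHarmonic, trigHarmonic_div_ofReal]

theorem stmt_2_general {ι : Type*} (s : Finset ι) (ω : ι → ℝ) {j : ι} (hj : j ∈ s)
    (hωj : ω j ≠ 0) (hω : ∀ i ∈ s, i ≠ j → |ω i| < |ω j|) (a b : ι → ℝ) (p q : ℝ → ℝ)
    (hp : ∀ α : ℝ, p α = ∑ i ∈ s, (a i * cos (ω i * α) + b i * sin (ω i * α)))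
    (hq : ∀ α : ℝ, q α = a j * cos (ω j * α) + b j * sin (ω j * α))
    (E : (ℝ → ℝ) → (ℝ → ℝ))
    (hE : ∀ (u : ℝ → ℝ) (α : ℝ), E u α = deriv u (α - π / 2)) :
    Tendsto (fun k : ℕ => ⨆ α : ℝ, |(E^[k] p) α / ω j ^ k - (E^[k] q) α / ω j ^ k|)
      atTop (nhds 0) ∧
    ∀ k : ℕ, ∃ c d : ℝ, c ^ 2 + d ^ 2 = a j ^ 2 + b j ^ 2 ∧
      ∀ α : ℝ, (E^[k] q) α / ω j ^ k = c * cos (ω j * α) + d * sin (ω j * α) := by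
  classical
  let z (i : ι) : ℂ := ⟨a i, -b i⟩
  obtain rfl : E = evolute := funext₂ hE
  obtain rfl : p = ∑ i ∈ s, trigHarmonic (ω i) (z i) := by
    ext α
    simp only [hp, Finset.sum_apply, trigHarmonic_eq_cos_sin, z, neg_neg]
  obtain rfl : q = trigHarmonic (ω j) (z j) := by
    ext α
    simp only [hq, trigHarmonic_eq_cos_sin, z, neg_neg]
  constructor
  · simp only [← sub_div, iterate_evolute_sum_trigHarmonic_sub s ω z hj]
    exact tendsto_iSup_abs_iterate_evolute_sum_div_pow _ _ _ fun i hi =>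
      hω i (Finset.mem_of_mem_erase hi) (Finset.ne_of_mem_erase hi)
  · intro k
    obtain ⟨w, hw, hwα⟩ := exists_iterate_evolute_trigHarmonic_div_pow hωj (z j) k
    refine ⟨w.re, -w.im, ?_, fun α => (hwα α).trans (trigHarmonic_eq_cos_sin _ _ _)⟩
    have hamplitude : Complex.normSq w = Complex.normSq (z j) := by
      rw [Complex.normSq_eq_norm_sq, hw, Complex.normSq_eq_norm_sq]
    simpa only [Complex.normSq_apply, z, ← pow_two, neg_sq] using hamplitude

/-- If the support function `p` is a trigonometric polynomial of
degree at most `N` with top harmonic `q`, and `E` is the evolute operator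
`(E u)(α) = u'(α − π/2)`, then the `N⁻ᵏ`-rescaled iterated evolutes of `p`
converge uniformly to those of `q`, and each rescaled `E^[k] q` is a pure harmonic
of order `N` of amplitude `√(a_N² + b_N²)`. -/
theorem stmt_2 (N : ℕ) (hN : 1 ≤ N) (a b : ℕ → ℝ) (p q : ℝ → ℝ)
    (hp : ∀ α : ℝ, p α =
      ∑ m ∈ Finset.range (N + 1), (a m * Real.cos (m * α) + b m * Real.sin (m * α)))
    (hq : ∀ α : ℝ, q α = a N * Real.cos (N * α) + b N * Real.sin (N * α))
    (E : (ℝ → ℝ) → (ℝ → ℝ))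
    (hE : ∀ (u : ℝ → ℝ) (α : ℝ), E u α = deriv u (α - Real.pi / 2)) :
    Tendsto
      (fun k : ℕ => ⨆ α : ℝ, |(E^[k] p) α / (N : ℝ) ^ k - (E^[k] q) α / (N : ℝ) ^ k|)
      atTop (nhds 0) ∧
    ∀ k : ℕ, ∃ c d : ℝ, c ^ 2 + d ^ 2 = (a N) ^ 2 + (b N) ^ 2 ∧
      ∀ α : ℝ, (E^[k] q) α / (N : ℝ) ^ k = c * Real.cos (N * α) + d * Real.sin (N * α) := by
  refine stmt_2_general (Finset.range (N + 1)) (fun m => m) (Finset.self_mem_range_succ N)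
    (Nat.cast_ne_zero.2 (Nat.one_le_iff_ne_zero.1 hN)) (fun m hm hmN => ?_) a b p q hp hq E hE
  simpa only [Nat.abs_cast, Nat.cast_lt] using (Finset.mem_range_succ_iff.1 hm).lt_of_ne hmN
end

section
/- Let p : ℝ → ℝ be continuous and 2π-periodic with ∫₀^{2π} p(t) dt = 0, ∫₀^{2π} p(t)·cos t dt = 0 and ∫₀^{2π} p(t)·sin t dt = 0. Define a sequence of functions by q₀ = p and q_{k+1}(α) = F_k(α) − (1/2π)·∫₀^{2π} F_k(s) ds, where F_k(α) = ∫₀^{α} q_k(t + π/2) dt. (Each q_{k+1} is the support function of the evolvent — the unique zero-signed-length involute — of the curve with support function q_k.) Then sup_{α ∈ ℝ} |q_k(α)| → 0 as k → ∞; i.e. the iterated evolvents of a hedgehog converge to its Steiner point, placed here at the origin. -/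
open Real Filter

/-!
Taking the evolvent multiplies the `n`-th Fourier coefficient by `i ^ (n - 1) / n`: the
quarter-turn contributes `i ^ n`, the integration `1 / (i n)`. Orthogonality to `1`, `cos` and
`sin` removes exactly the frequencies `|n| ≤ 1`, on which this multiplier does not contract; at
every other frequency it has modulus at most `1 / 2`. The first two evolvents supply the factor
`1 / n ^ 2` that makes the Fourier series converge absolutely, and each further one halves the
resulting uniform bound.
-/

open MeasureTheory (volume)
open intervalIntegral

section MeanZeroPrimitive

variable {E : Type*} [NormedAddCommGroup E] [NormedSpace ℝ E] {T : ℝ} {f : ℝ → E}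

/-- The primitive of `f` normalized to have mean value zero over `[0, T]`, for `T ≠ 0`. -/
noncomputable def meanZeroPrimitive (T : ℝ) (f : ℝ → E) (x : ℝ) : E :=
  (∫ t in (0 : ℝ)..x, f t) - (1 / T) • ∫ s in (0 : ℝ)..T, ∫ t in (0 : ℝ)..s, f t

theorem hasDerivAt_meanZeroPrimitive [CompleteSpace E] (hf : Continuous f) (x : ℝ) :
    HasDerivAt (meanZeroPrimitive T f) (f x) x :=
  (hf.integral_hasStrictDerivAt 0 x).hasDerivAt.sub_const _

theorem continuous_meanZeroPrimitive (hf : ∀ a b, IntervalIntegrable f volume a b) :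
    Continuous (meanZeroPrimitive T f) :=
  (continuous_primitive hf 0).sub continuous_const

theorem periodic_meanZeroPrimitive (hf : ∀ a b, IntervalIntegrable f volume a b)
    (hper : Function.Periodic f T) (h0 : ∫ t in (0 : ℝ)..T, f t = 0) :
    Function.Periodic (meanZeroPrimitive T f) T := fun x ↦ by
  have hx : ∫ t in (0 : ℝ)..(x + T), f t = ∫ t in (0 : ℝ)..x, f t := by
    rw [hper.intervalIntegral_add_eq_add 0 x hf, zero_add, h0, add_zero]
  rw [meanZeroPrimitive, hx, meanZeroPrimitive]

theorem integral_meanZeroPrimitive [CompleteSpace E] (hT : T ≠ 0)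
    (hf : ∀ a b, IntervalIntegrable f volume a b) :
    ∫ x in (0 : ℝ)..T, meanZeroPrimitive T f x = 0 := by
  simp only [meanZeroPrimitive]
  rw [integral_sub ((continuous_primitive hf 0).intervalIntegrable _ _) intervalIntegrable_const,
    intervalIntegral.integral_const, sub_zero, smul_smul, mul_one_div_cancel hT, one_smul, sub_self]

end MeanZeroPrimitive

theorem intervalIntegral_comp_add_right_of_periodic {E : Type*} [NormedAddCommGroup E]
    [NormedSpace ℝ E] {T : ℝ} {f : ℝ → E} (hf : Function.Periodic f T) (d : ℝ) :
    ∫ t in (0 : ℝ)..T, f (t + d) = ∫ t in (0 : ℝ)..T, f t := by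
  rw [integral_comp_add_right, zero_add, add_comm T d, hf.intervalIntegral_add_eq d 0, zero_add]

section FourierCoeff

variable {E : Type*} [NormedAddCommGroup E] [NormedSpace ℂ E] {T : ℝ}

theorem fourierCoeffOn_zero_left_eq_integral (hT : 0 < T) (f : ℝ → E) (n : ℤ) :
    fourierCoeffOn hT f n =
      (1 / T) • ∫ x in (0 : ℝ)..T, fourier (-n) (x : AddCircle T) • f x := by
  rw [fourierCoeffOn_eq_integral, sub_zero]

theorem norm_fourierCoeffOn_le {a b : ℝ} (hab : a < b) (f : ℝ → E) (n : ℤ) :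
    ‖fourierCoeffOn hab f n‖ ≤ (1 / (b - a)) * ∫ x in a..b, ‖f x‖ := by
  have hlen : 0 ≤ 1 / (b - a) := one_div_nonneg.2 (sub_pos.2 hab).le
  rw [fourierCoeffOn_eq_integral, norm_smul, Real.norm_of_nonneg hlen]
  refine mul_le_mul_of_nonneg_left ((norm_integral_le_integral_norm hab.le).trans_eq ?_) hlen
  simp only [norm_smul, fourier_apply, Circle.norm_coe, one_mul]

theorem fourierCoeffOn_comp_add_right (hT : 0 < T) {f : ℝ → E} (hf : Function.Periodic f T)
    (d : ℝ) (n : ℤ) :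
    fourierCoeffOn hT (fun x ↦ f (x + d)) n =
      fourier n (d : AddCircle T) • fourierCoeffOn hT f n := by
  have hper : Function.Periodic (fun x : ℝ ↦ fourier (-n) (x : AddCircle T) • f x) T := fun x ↦ by
    simp only [AddCircle.coe_add_period, hf x]
  have hchar (x : ℝ) : fourier (-n) (x : AddCircle T) =
      fourier n (d : AddCircle T) * fourier (-n) ((x + d : ℝ) : AddCircle T) := by
    simp only [fourier_coe_apply, ← Complex.exp_add]
    congr 1
    push_cast
    ring
  simp only [fourierCoeffOn_zero_left_eq_integral]
  rw [smul_comm, ← intervalIntegral_comp_add_right_of_periodic hper d,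
    ← intervalIntegral.integral_smul (fourier n (d : AddCircle T))]
  simp only [smul_smul, ← hchar]

theorem fourierCoeff_lift_eq_fourierCoeffOn [hT : Fact (0 < T)] {f : ℝ → E}
    (hf : Function.Periodic f T) (n : ℤ) :
    fourierCoeff hf.lift n = fourierCoeffOn hT.out f n := by
  rw [fourierCoeff_eq_intervalIntegral _ n 0, zero_add, fourierCoeffOn_zero_left_eq_integral]
  simp only [hf.lift_coe]

theorem norm_le_tsum_norm_fourierCoeff [Fact (0 < T)] (f : C(AddCircle T, ℂ))
    (hf : Summable fun n ↦ ‖fourierCoeff f n‖) (x : AddCircle T) :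
    ‖f x‖ ≤ ∑' n, ‖fourierCoeff f n‖ := by
  rw [← (has_pointwise_sum_fourier_series_of_summable hf.of_norm x).tsum_eq]
  refine tsum_of_norm_bounded hf.hasSum fun n ↦ ?_
  rw [norm_smul, fourier_apply, Circle.norm_coe, mul_one]

theorem norm_le_tsum_norm_fourierCoeffOn (hT : 0 < T) {f : ℝ → ℂ} (hf : Continuous f)
    (hper : Function.Periodic f T) (hsum : Summable fun n ↦ ‖fourierCoeffOn hT f n‖) (x : ℝ) :
    ‖f x‖ ≤ ∑' n, ‖fourierCoeffOn hT f n‖ := by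
  have : Fact (0 < T) := ⟨hT⟩
  let F : C(AddCircle T, ℂ) := ⟨hper.lift, continuous_coinduced_dom.2 hf⟩
  have hcoeff (n : ℤ) : fourierCoeff F n = fourierCoeffOn hT f n :=
    fourierCoeff_lift_eq_fourierCoeffOn hper n
  simp only [← hcoeff] at hsum ⊢
  exact norm_le_tsum_norm_fourierCoeff F hsum x

end FourierCoeff

theorem intervalIntegrable_ofReal {f : ℝ → ℝ} {μ : MeasureTheory.Measure ℝ} {a b : ℝ}
    (hf : IntervalIntegrable f μ a b) : IntervalIntegrable (fun x ↦ (f x : ℂ)) μ a b :=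
  ⟨hf.1.ofReal, hf.2.ofReal⟩

/-- The `n`-th Fourier coefficient, over `[0, 2π]`, of a real function such as a
support function; it is normalized by `1 / (2π)`. -/
noncomputable def supportCoeff (f : ℝ → ℝ) (n : ℤ) : ℂ :=
  fourierCoeffOn two_pi_pos (fun x ↦ (f x : ℂ)) n

theorem supportCoeff_eq_integral_cos_sub_integral_sin {f : ℝ → ℝ}
    (hf : IntervalIntegrable f volume 0 (2 * π)) (n : ℤ) :
    supportCoeff f n = (1 / (2 * π)) •
      (((∫ x in (0 : ℝ)..(2 * π), f x * cos (n * x) : ℝ) : ℂ) -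
        Complex.I * ((∫ x in (0 : ℝ)..(2 * π), f x * sin (n * x) : ℝ) : ℂ)) := by
  have hcos : IntervalIntegrable (fun x ↦ ((f x * cos (n * x) : ℝ) : ℂ)) volume 0 (2 * π) :=
    intervalIntegrable_ofReal (hf.mul_continuousOn (by fun_prop))
  have hsin : IntervalIntegrable (fun x ↦ ((f x * sin (n * x) : ℝ) : ℂ)) volume 0 (2 * π) :=
    intervalIntegrable_ofReal (hf.mul_continuousOn (by fun_prop))
  have euler (x : ℝ) : fourier (-n) (x : AddCircle (2 * π)) • (f x : ℂ) =
      ((f x * cos (n * x) : ℝ) : ℂ) - Complex.I * ((f x * sin (n * x) : ℝ) : ℂ) := by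
    have harg : 2 * π * Complex.I * ((-n : ℤ) : ℂ) * x / ((2 * π : ℝ) : ℂ) =
        -(n * x : ℂ) * Complex.I := by
      push_cast
      field_simp
    rw [fourier_coe_apply, harg, Complex.exp_mul_I, Complex.cos_neg, Complex.sin_neg, smul_eq_mul]
    push_cast
    ring
  rw [supportCoeff, fourierCoeffOn_zero_left_eq_integral]
  simp only [euler]
  rw [integral_sub hcos (hsin.const_mul _), integral_const_mul,
    intervalIntegral.integral_ofReal, intervalIntegral.integral_ofReal]

theorem supportCoeff_eq_zero_of_abs_eq_one {f : ℝ → ℝ}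
    (hf : IntervalIntegrable f volume 0 (2 * π))
    (hc : ∫ x in (0 : ℝ)..(2 * π), f x * cos x = 0)
    (hs : ∫ x in (0 : ℝ)..(2 * π), f x * sin x = 0) {n : ℤ} (hn : |n| = 1) :
    supportCoeff f n = 0 := by
  rw [supportCoeff_eq_integral_cos_sub_integral_sin hf]
  obtain rfl | rfl := (abs_eq zero_le_one).1 hn <;> simp [hc, hs]

theorem summable_norm_supportCoeff_div_sq (f : ℝ → ℝ) :
    Summable fun n : ℤ ↦ ‖supportCoeff f n‖ / (n : ℝ) ^ 2 := by
  have hsq : Summable fun n : ℤ ↦ 1 / (n : ℝ) ^ 2 := summable_one_div_int_pow.2 one_lt_two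
  refine .of_nonneg_of_le (fun n ↦ by positivity) (fun n ↦ ?_)
    (hsq.mul_left (1 / (2 * π - 0) * ∫ x in (0 : ℝ)..(2 * π), ‖(f x : ℂ)‖))
  rw [mul_one_div]
  exact div_le_div_of_nonneg_right (norm_fourierCoeffOn_le _ _ n) (sq_nonneg _)

theorem fourier_quarter_turn (n : ℤ) :
    fourier n ((π / 2 : ℝ) : AddCircle (2 * π)) = Complex.I ^ n := by
  have harg : 2 * π * Complex.I * n * ((π / 2 : ℝ) : ℂ) / ((2 * π : ℝ) : ℂ) =
      n * (π / 2 * Complex.I) := by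
    push_cast
    field_simp
  rw [fourier_coe_apply, harg, Complex.exp_int_mul, Complex.exp_pi_div_two_mul_I]

/-- The support function of the evolvent of the hedgehog with support function `f`. For `f` of
mean zero it is the mean-zero periodic solution `h` of `deriv h (α - π / 2) = f α`. -/
noncomputable def evolvent (f : ℝ → ℝ) : ℝ → ℝ :=
  meanZeroPrimitive (2 * π) fun t ↦ f (t + π / 2)

/-- The support functions of hedgehogs of zero signed length, the class on which the evolvent acts.
Only continuity is required. -/
structure IsZeroLengthSupport (f : ℝ → ℝ) : Prop where
  continuous : Continuous f
  periodic : Function.Periodic f (2 * π)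
  integral_eq_zero : ∫ t in (0 : ℝ)..(2 * π), f t = 0

namespace IsZeroLengthSupport

variable {f : ℝ → ℝ}

protected theorem comp_add_right (hf : IsZeroLengthSupport f) (d : ℝ) :
    IsZeroLengthSupport fun t ↦ f (t + d) where
  continuous := hf.continuous.comp (continuous_add_const d)
  periodic := hf.periodic.add_const d
  integral_eq_zero :=
    (intervalIntegral_comp_add_right_of_periodic hf.periodic d).trans hf.integral_eq_zero

protected theorem meanZeroPrimitive (hf : IsZeroLengthSupport f) :
    IsZeroLengthSupport (meanZeroPrimitive (2 * π) f) where
  continuous := continuous_meanZeroPrimitive hf.continuous.intervalIntegrable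
  periodic := periodic_meanZeroPrimitive hf.continuous.intervalIntegrable hf.periodic
    hf.integral_eq_zero
  integral_eq_zero := integral_meanZeroPrimitive two_pi_pos.ne' hf.continuous.intervalIntegrable

protected theorem evolvent (hf : IsZeroLengthSupport f) : IsZeroLengthSupport (evolvent f) :=
  (hf.comp_add_right (π / 2)).meanZeroPrimitive

theorem iterate_evolvent (hf : IsZeroLengthSupport f) (k : ℕ) :
    IsZeroLengthSupport (evolvent^[k] f) :=
  Function.Iterate.rec IsZeroLengthSupport hf (fun _ ↦ IsZeroLengthSupport.evolvent) k

theorem supportCoeff_zero (hf : IsZeroLengthSupport f) : supportCoeff f 0 = 0 := by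
  rw [supportCoeff_eq_integral_cos_sub_integral_sin (hf.continuous.intervalIntegrable _ _)]
  simp [hf.integral_eq_zero]

theorem supportCoeff_meanZeroPrimitive (hf : IsZeroLengthSupport f) {n : ℤ} (hn : n ≠ 0) :
    supportCoeff (meanZeroPrimitive (2 * π) f) n = supportCoeff f n / (Complex.I * n) := by
  have hderiv (x : ℝ) :
      HasDerivAt (fun y ↦ ((meanZeroPrimitive (2 * π) f y : ℝ) : ℂ)) ((f x : ℝ) : ℂ) x :=
    (hasDerivAt_meanZeroPrimitive hf.continuous x).ofReal_comp
  have hcont : Continuous fun x ↦ (f x : ℂ) := Complex.continuous_ofReal.comp hf.continuous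
  rw [supportCoeff, fourierCoeffOn_of_hasDerivAt two_pi_pos hn (fun x _ ↦ hderiv x)
    (hcont.intervalIntegrable _ _), hf.meanZeroPrimitive.periodic.eq, sub_self, ← supportCoeff]
  push_cast
  field_simp
  ring

/-- At `n = 0` the multiplier is the junk value `x / 0 = 0`; both sides vanish there. -/
theorem supportCoeff_evolvent (hf : IsZeroLengthSupport f) (n : ℤ) :
    supportCoeff (evolvent f) n = Complex.I ^ (n - 1) / n * supportCoeff f n := by
  obtain rfl | hn := eq_or_ne n 0
  · simp [hf.evolvent.supportCoeff_zero]
  have hshift : supportCoeff (fun t ↦ f (t + π / 2)) n = Complex.I ^ n * supportCoeff f n := by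
    have hper : Function.Periodic (fun x ↦ (f x : ℂ)) (2 * π) :=
      hf.periodic.comp ((↑) : ℝ → ℂ)
    rw [supportCoeff, fourierCoeffOn_comp_add_right two_pi_pos hper, fourier_quarter_turn,
      smul_eq_mul, ← supportCoeff]
  rw [evolvent, (hf.comp_add_right (π / 2)).supportCoeff_meanZeroPrimitive hn, hshift,
    zpow_sub_one₀ Complex.I_ne_zero]
  field_simp

theorem supportCoeff_iterate_evolvent (hf : IsZeroLengthSupport f) (n : ℤ) (k : ℕ) :
    supportCoeff (evolvent^[k] f) n = (Complex.I ^ (n - 1) / n) ^ k * supportCoeff f n := by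
  induction k with
  | zero => rw [Function.iterate_zero, id, pow_zero, one_mul]
  | succ k ih =>
    rw [Function.iterate_succ_apply', (hf.iterate_evolvent k).supportCoeff_evolvent, ih, pow_succ',
      mul_assoc]

theorem norm_supportCoeff_iterate_evolvent (hf : IsZeroLengthSupport f) (n : ℤ) (k : ℕ) :
    ‖supportCoeff (evolvent^[k] f) n‖ = ‖supportCoeff f n‖ / |(n : ℝ)| ^ k := by
  rw [hf.supportCoeff_iterate_evolvent, norm_mul, norm_pow, norm_div, norm_zpow, Complex.norm_I,
    one_zpow, Complex.norm_intCast, one_div, inv_pow, div_eq_inv_mul]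

theorem norm_supportCoeff_iterate_evolvent_le (hf : IsZeroLengthSupport f)
    (hone : ∀ n : ℤ, |n| = 1 → supportCoeff f n = 0) (k : ℕ) (n : ℤ) :
    ‖supportCoeff (evolvent^[k + 2] f) n‖ ≤
      (1 / 2) ^ k * (‖supportCoeff f n‖ / (n : ℝ) ^ 2) := by
  rw [hf.norm_supportCoeff_iterate_evolvent]
  obtain rfl | hzero := eq_or_ne n 0
  · simp [hf.supportCoeff_zero]
  obtain hn | hn := eq_or_ne |n| 1
  · simp [hone n hn]
  have h2 : (2 : ℝ) ≤ |(n : ℝ)| := by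
    have : 2 ≤ |n| := by have := abs_pos.2 hzero; lia
    exact_mod_cast this
  calc ‖supportCoeff f n‖ / |(n : ℝ)| ^ (k + 2)
      = (1 / |(n : ℝ)|) ^ k * (‖supportCoeff f n‖ / (n : ℝ) ^ 2) := by
        rw [pow_add, sq_abs, one_div_pow]
        ring
    _ ≤ (1 / 2) ^ k * (‖supportCoeff f n‖ / (n : ℝ) ^ 2) := by gcongr

theorem abs_iterate_evolvent_le (hf : IsZeroLengthSupport f)
    (hone : ∀ n : ℤ, |n| = 1 → supportCoeff f n = 0) (k : ℕ) (x : ℝ) :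
    |evolvent^[k + 2] f x| ≤
      (1 / 2) ^ k * ∑' n : ℤ, ‖supportCoeff f n‖ / (n : ℝ) ^ 2 := by
  have hk := hf.iterate_evolvent (k + 2)
  have hbound := hf.norm_supportCoeff_iterate_evolvent_le hone k
  have hmaj := (summable_norm_supportCoeff_div_sq f).mul_left ((1 / 2) ^ k)
  have hsum : Summable fun n ↦ ‖supportCoeff (evolvent^[k + 2] f) n‖ :=
    hmaj.of_nonneg_of_le (fun _ ↦ norm_nonneg _) hbound
  calc |evolvent^[k + 2] f x|
      = ‖(evolvent^[k + 2] f x : ℂ)‖ := by rw [Complex.norm_real, Real.norm_eq_abs]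
    _ ≤ ∑' n, ‖supportCoeff (evolvent^[k + 2] f) n‖ :=
        norm_le_tsum_norm_fourierCoeffOn two_pi_pos (Complex.continuous_ofReal.comp hk.continuous)
          (hk.periodic.comp ((↑) : ℝ → ℂ)) hsum x
    _ ≤ ∑' n : ℤ, (1 / 2) ^ k * (‖supportCoeff f n‖ / (n : ℝ) ^ 2) :=
        hsum.tsum_le_tsum hbound hmaj
    _ = (1 / 2) ^ k * ∑' n : ℤ, ‖supportCoeff f n‖ / (n : ℝ) ^ 2 := tsum_mul_left

theorem tendsto_iSup_abs_iterate_evolvent (hf : IsZeroLengthSupport f)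
    (hone : ∀ n : ℤ, |n| = 1 → supportCoeff f n = 0) :
    Tendsto (fun k ↦ ⨆ α, |evolvent^[k] f α|) atTop (nhds 0) := by
  rw [← tendsto_add_atTop_iff_nat 2]
  refine squeeze_zero (fun _ ↦ Real.iSup_nonneg fun _ ↦ abs_nonneg _)
    (fun k ↦ ciSup_le (hf.abs_iterate_evolvent_le hone k)) ?_
  simpa using (tendsto_pow_atTop_nhds_zero_of_lt_one (r := (1 / 2 : ℝ)) (by norm_num)
    (by norm_num)).mul_const (∑' n : ℤ, ‖supportCoeff f n‖ / (n : ℝ) ^ 2)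

end IsZeroLengthSupport

/-- Let `p` be continuous, `2π`-periodic, and `L²`-orthogonal to
`1`, `cos` and `sin`. Define iterated evolvents by `q₀ = p` and
`q_{k+1}(α) = ∫₀^α q_k(t + π/2) dt − (1/2π)∫₀^{2π} (∫₀^s q_k(t + π/2) dt) ds`.
Then `sup_α |q_k(α)| → 0`: the iterated evolvents of a hedgehog converge to its
Steiner point (placed at the origin). -/
theorem stmt_3 (p : ℝ → ℝ) (hp : Continuous p)
    (hper : Function.Periodic p (2 * Real.pi))
    (h0 : ∫ t in (0 : ℝ)..(2 * Real.pi), p t = 0)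
    (hc : ∫ t in (0 : ℝ)..(2 * Real.pi), p t * Real.cos t = 0)
    (hs : ∫ t in (0 : ℝ)..(2 * Real.pi), p t * Real.sin t = 0)
    (q : ℕ → ℝ → ℝ) (hq0 : q 0 = p)
    (hq : ∀ (k : ℕ) (α : ℝ), q (k + 1) α =
      (∫ t in (0 : ℝ)..α, q k (t + Real.pi / 2)) -
        (1 / (2 * Real.pi)) *
          ∫ s in (0 : ℝ)..(2 * Real.pi), (∫ t in (0 : ℝ)..s, q k (t + Real.pi / 2))) :
    Tendsto (fun k : ℕ => ⨆ α : ℝ, |q k α|) atTop (nhds 0) := by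
  have hf : IsZeroLengthSupport p := ⟨hp, hper, h0⟩
  have hone (n : ℤ) (hn : |n| = 1) : supportCoeff p n = 0 :=
    supportCoeff_eq_zero_of_abs_eq_one (hp.intervalIntegrable _ _) hc hs hn
  have hiter (k : ℕ) : q k = evolvent^[k] p := by
    induction k with
    | zero => exact hq0
    | succ k ih => rw [Function.iterate_succ_apply', ← ih]; exact funext (hq k)
  simpa only [hiter] using hf.tendsto_iSup_abs_iterate_evolvent hone
end

section
/- Let f : ℝ → ℝ be continuously differentiable and 2π-periodic, and set p(α) = −α·cos α + f(α). Suppose there exist u, v ∈ ℝ such that p'(α − π/2) = p(α) + u·cos α + v·sin α for all α ∈ ℝ (i.e. the curve with support function p differs from its evolute by a parallel translation). Then there exist a, b ∈ ℝ such that f(α) = a·cos α + b·sin α for all α; consequently the curve is a parallel translate of the cycloid with support function −α·cos α. -/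
open Real

/-!
The evolute condition is a functional differential equation `f' = f(· + π / 2) + h`, where
`h x = cos x • a + sin x • b`. The function `w = f + f(· + π)` has period `π` and solves the
homogeneous equation `w' = w(· + π / 2)`, so `w ± w(· + π / 2)` are periodic multiples of
`exp (± x)` and hence zero. Thus `f(· + π) = -f`, and then `f - x • h` solves the harmonic
oscillator: the forcing is resonant. Antiperiodicity of `f` excludes the secular term `x • h` and
leaves a first harmonic.
-/

section FunctionalDifferentialEquation

variable {E : Type*} [NormedAddCommGroup E] [NormedSpace ℝ E]

theorem eq_of_hasDerivAt_zero {F : ℝ → E} (hF : ∀ x, HasDerivAt F 0 x) (x y : ℝ) : F x = F y :=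
  is_const_of_deriv_eq_zero (fun t ↦ (hF t).differentiableAt) (fun t ↦ (hF t).deriv) x y

theorem eq_zero_of_hasDerivAt_smul_of_periodic {y : ℝ → E} {c T : ℝ} (hc : c ≠ 0) (hT : T ≠ 0)
    (hy : ∀ x, HasDerivAt y (c • y x) x) (hper : y.Periodic T) : y = 0 := by
  have hderiv (x : ℝ) : HasDerivAt (fun x ↦ exp (-c * x) • y x) 0 x := by
    refine (((hasDerivAt_id' x).const_mul (-c)).exp.smul (hy x)).congr_deriv ?_
    module
  funext x
  by_contra hne
  have hconst : exp (-c * (x + T)) • y x = exp (-c * x) • y x := by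
    simpa only [hper x] using eq_of_hasDerivAt_zero hderiv (x + T) x
  have hexponent : -c * (x + T) = -c * x := exp_injective (smul_left_injective ℝ hne hconst)
  exact mul_ne_zero hc hT (by linarith)

theorem eq_zero_of_hasDerivAt_shift_of_periodic {w : ℝ → E} {T : ℝ} (hT : T ≠ 0)
    (hw : ∀ x, HasDerivAt w (w (x + T)) x) (hper : w.Periodic (2 * T)) : w = 0 := by
  have hshift (x : ℝ) : HasDerivAt (fun x ↦ w (x + T)) (w x) x := by
    have hx : w (x + T + T) = w x := by rw [add_assoc, ← two_mul, hper x]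
    exact hx ▸ (hw (x + T)).comp_add_const x T
  have hper_shift : Function.Periodic (fun x ↦ w (x + T)) (2 * T) := hper.add_const T
  have hT' : 2 * T ≠ 0 := mul_ne_zero two_ne_zero hT
  have hsum : (w + fun x ↦ w (x + T)) = 0 := by
    refine eq_zero_of_hasDerivAt_smul_of_periodic one_ne_zero hT' (fun x ↦ ?_)
      (hper.add hper_shift)
    refine ((hw x).add (hshift x)).congr_deriv ?_
    simp only [Pi.add_apply]
    module
  have hdiff : (w - fun x ↦ w (x + T)) = 0 := by
    refine eq_zero_of_hasDerivAt_smul_of_periodic (neg_ne_zero.mpr one_ne_zero) hT' (fun x ↦ ?_)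
      (hper.sub hper_shift)
    refine ((hw x).sub (hshift x)).congr_deriv ?_
    simp only [Pi.sub_apply]
    module
  funext x
  have hsum_x : w x + w (x + T) = 0 := congrFun hsum x
  have hdiff_x : w x - w (x + T) = 0 := congrFun hdiff x
  rw [Pi.zero_apply]
  linear_combination (norm := module) (1 / 2 : ℝ) • hsum_x + (1 / 2 : ℝ) • hdiff_x

theorem antiperiodic_of_hasDerivAt_shift_add {y h : ℝ → E} {T : ℝ} (hT : T ≠ 0)
    (hy : ∀ x, HasDerivAt y (y (x + T) + h x) x) (hh : h.Antiperiodic (2 * T))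
    (hper : y.Periodic (2 * (2 * T))) : y.Antiperiodic (2 * T) := by
  have hzero : (fun x ↦ y x + y (x + 2 * T)) = 0 := by
    refine eq_zero_of_hasDerivAt_shift_of_periodic hT (fun x ↦ ?_) (fun x ↦ ?_)
    · refine ((hy x).add ((hy (x + 2 * T)).comp_add_const x (2 * T))).congr_deriv ?_
      rw [hh x, add_right_comm x (2 * T) T]
      abel
    · rw [add_assoc x, ← two_mul, hper x, add_comm]
  exact fun x ↦ eq_neg_of_add_eq_zero_right (congrFun hzero x)

theorem eq_cos_smul_add_sin_smul_of_hasDerivAt {y z : ℝ → E}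
    (hy : ∀ x, HasDerivAt y (z x) x) (hz : ∀ x, HasDerivAt z (-y x) x) (x : ℝ) :
    y x = cos x • y 0 + sin x • z 0 := by
  -- Rotating the phase vector `(y, z)` back by the angle `t` gives two constants of motion.
  have hfst (t : ℝ) : HasDerivAt (fun t ↦ cos t • y t - sin t • z t) 0 t := by
    refine (((hasDerivAt_cos t).smul (hy t)).sub
      ((hasDerivAt_sin t).smul (hz t))).congr_deriv ?_
    module
  have hsnd (t : ℝ) : HasDerivAt (fun t ↦ sin t • y t + cos t • z t) 0 t := by
    refine (((hasDerivAt_sin t).smul (hy t)).add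
      ((hasDerivAt_cos t).smul (hz t))).congr_deriv ?_
    module
  have hfst_const : cos x • y x - sin x • z x = y 0 := by
    simpa using eq_of_hasDerivAt_zero hfst x 0
  have hsnd_const : sin x • y x + cos x • z x = z 0 := by
    simpa using eq_of_hasDerivAt_zero hsnd x 0
  rw [← hfst_const, ← hsnd_const]
  linear_combination (norm := module) -(sin_sq_add_cos_sq x) • y x

section QuarterTurn

variable {y : ℝ → E} {a b : E}

theorem eq_first_harmonic_add_secular_of_antiperiodic
    (hy : ∀ x, HasDerivAt y (y (x + π / 2) + (cos x • a + sin x • b)) x)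
    (hanti : y.Antiperiodic π) (x : ℝ) :
    y x = cos x • y 0 + sin x • y (π / 2) + x • (cos x • a + sin x • b) := by
  have hfst (t : ℝ) : HasDerivAt (fun t ↦ y t - t • (cos t • a + sin t • b))
      (y (t + π / 2) - t • (cos t • b - sin t • a)) t := by
    refine ((hy t).sub ((hasDerivAt_id' t).smul (((hasDerivAt_cos t).smul_const a).add
      ((hasDerivAt_sin t).smul_const b)))).congr_deriv ?_
    simp only [Pi.add_apply]
    module
  have hsnd (t : ℝ) : HasDerivAt (fun t ↦ y (t + π / 2) - t • (cos t • b - sin t • a))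
      (-(y t - t • (cos t • a + sin t • b))) t := by
    refine (((hy (t + π / 2)).comp_add_const t (π / 2)).sub
      ((hasDerivAt_id' t).smul (((hasDerivAt_cos t).smul_const b).sub
        ((hasDerivAt_sin t).smul_const a)))).congr_deriv ?_
    simp only [Pi.sub_apply]
    rw [add_assoc t, add_halves, hanti t, cos_add_pi_div_two, sin_add_pi_div_two]
    module
  have hosc := eq_cos_smul_add_sin_smul_of_hasDerivAt hfst hsnd x
  simp only [zero_smul, sub_zero, zero_add] at hosc
  exact sub_eq_iff_eq_add.mp hosc

theorem forcing_eq_zero_of_antiperiodic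
    (hy : ∀ x, HasDerivAt y (y (x + π / 2) + (cos x • a + sin x • b)) x)
    (hanti : y.Antiperiodic π) (x : ℝ) : cos x • a + sin x • b = 0 := by
  have hx := eq_first_harmonic_add_secular_of_antiperiodic hy hanti x
  have hx_add_pi := eq_first_harmonic_add_secular_of_antiperiodic hy hanti (x + π)
  rw [hanti x, cos_add_pi, sin_add_pi] at hx_add_pi
  have hsecular : π • (cos x • a + sin x • b) = 0 := by
    linear_combination (norm := module) hx + hx_add_pi
  exact (smul_eq_zero.mp hsecular).resolve_left pi_ne_zero

theorem eq_first_harmonic_of_periodic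
    (hy : ∀ x, HasDerivAt y (y (x + π / 2) + (cos x • a + sin x • b)) x)
    (hper : y.Periodic (2 * π)) (x : ℝ) : y x = cos x • y 0 + sin x • y (π / 2) := by
  have hpi : 2 * (π / 2) = π := mul_div_cancel₀ π two_ne_zero
  have hforcing : Function.Antiperiodic (fun x ↦ cos x • a + sin x • b) π := fun x ↦ by
    simp only [cos_add_pi, sin_add_pi]
    module
  have hanti : y.Antiperiodic π := by
    rw [← hpi] at hforcing hper ⊢
    exact antiperiodic_of_hasDerivAt_shift_add (by positivity) hy hforcing hper
  rw [eq_first_harmonic_add_secular_of_antiperiodic hy hanti x,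
    forcing_eq_zero_of_antiperiodic hy hanti x, smul_zero, add_zero]

end QuarterTurn

end FunctionalDifferentialEquation

theorem hasDerivAt_of_evolute_eq_translate {f p : ℝ → ℝ} (hf : Differentiable ℝ f)
    (hp : ∀ α, p α = -α * cos α + f α) {u v : ℝ}
    (heq : ∀ α, deriv p (α - π / 2) = p α + u * cos α + v * sin α) (x : ℝ) :
    HasDerivAt f (f (x + π / 2) + (cos x * (v + 1) + sin x * (π / 2 - u))) x := by
  have hderiv : HasDerivAt p (-1 * cos x + -x * -sin x + deriv f x) x := by
    rw [funext hp]
    exact ((hasDerivAt_neg' x).mul (hasDerivAt_cos x)).add (hf x).hasDerivAt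
  have hevolute := heq (x + π / 2)
  rw [add_sub_cancel_right, hderiv.deriv, hp, cos_add_pi_div_two, sin_add_pi_div_two] at hevolute
  exact (hf x).hasDerivAt.congr_deriv (by linear_combination hevolute)

/-- Let `f` be `C¹` and `2π`-periodic, and `p(α) = −α·cos α + f(α)`.
If the curve with support function `p` differs from its evolute by a parallel
translation, i.e. `p'(α − π/2) = p(α) + u·cos α + v·sin α` for some `u, v`,
then `f` is a first harmonic: the curve is a translate of the cycloid. -/
theorem stmt_4 (f : ℝ → ℝ) (hf : ContDiff ℝ 1 f)
    (hper : Function.Periodic f (2 * Real.pi))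
    (p : ℝ → ℝ) (hp : ∀ α : ℝ, p α = -α * Real.cos α + f α)
    (u v : ℝ)
    (heq : ∀ α : ℝ, deriv p (α - Real.pi / 2) = p α + u * Real.cos α + v * Real.sin α) :
    ∃ a b : ℝ, ∀ α : ℝ, f α = a * Real.cos α + b * Real.sin α := by
  have hfde := hasDerivAt_of_evolute_eq_translate (hf.differentiable one_ne_zero) hp heq
  refine ⟨f 0, f (π / 2), fun α ↦ ?_⟩
  simpa only [smul_eq_mul, mul_comm] using eq_first_harmonic_of_periodic hfde hper α
end

section
/- Let n ≥ 3, let R : ℝ² → ℝ² be the rotation about the origin by 2π/n, let σ : ℝⁿ → ℝⁿ be the cyclic shift (σp)_j = p_{j−1} (indices mod n), and let C, S ∈ ℝⁿ be the vectors C_j = cos(2πj/n), S_j = sin(2πj/n). Suppose f : ℝⁿ → ℝ² is ℝ-linear and satisfies f(σp) = R(f(p)) for all p ∈ ℝⁿ, and f(p + aC + bS) = f(p) + (a, b) for all p ∈ ℝⁿ and a, b ∈ ℝ. Then f(p) = (2/n)·Σ_{j=1}^{n} p_j·(cos(2πj/n), sin(2πj/n)) for all p ∈ ℝⁿ; this is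 the vertex centroid of the equiangular hedgehog with support numbers p. In particular, any Minkowski-linear, motion-equivariant point assignment on equiangular n-gons is the vertex centroid. -/
open Real

/-!
Identify `ℝ²` with `ℂ`, so that the rotation by `2π/n` is multiplication by `ζ = exp (2πi/n)`.
Shift equivariance forces `f eⱼ = ζʲ · f e₀`, hence `f p = (∑ pⱼ ζʲ) · f e₀`, and the single
translation value `f C = 1` determines `f e₀`: the sum `∑ Re (ζʲ) ζʲ` equals `n / 2` because
`Re (ζʲ) ζʲ = (ζ²ʲ + 1) / 2` and the geometric sum of `ζ² ≠ 1` vanishes.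
-/

section ShiftEquivariant

variable {n : ℕ} [NeZero n]

theorem single_add_one_eq_shift {A : Type*} [Zero A] (i : Fin n) (a : A) :
    (Pi.single (i + 1) a : Fin n → A) = fun j => (Pi.single i a : Fin n → A) (j - 1) := by
  ext j
  simp only [Pi.single_apply, sub_eq_iff_eq_add]

theorem map_single_eq_iterate_of_map_shift {A M : Type*} [Zero A] {f : (Fin n → A) → M}
    {R : M → M} (hf : ∀ p : Fin n → A, f (fun j => p (j - 1)) = R (f p)) (a : A) (j : Fin n) :
    f (Pi.single j a) = R^[j] (f (Pi.single 0 a)) := by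
  have map_single_ofNat (k : ℕ) : f (Pi.single (Fin.ofNat n k) a) = R^[k] (f (Pi.single 0 a)) := by
    induction k with
    | zero => rfl
    | succ k ih =>
      have ofNat_succ : Fin.ofNat n (k + 1) = Fin.ofNat n k + 1 := by
        ext
        simp [Fin.val_add]
      rw [ofNat_succ, single_add_one_eq_shift, hf, ih, Function.iterate_succ_apply']
  simpa only [Fin.ofNat_val_eq_self] using map_single_ofNat j

theorem map_eq_sum_smul_pow_mul_of_map_shift {A B : Type*} [CommSemiring A] [Semiring B]
    [Algebra A B] {g : (Fin n → A) →ₗ[A] B} {ζ : B}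
    (hg : ∀ p : Fin n → A, g (fun j => p (j - 1)) = ζ * g p) (p : Fin n → A) :
    g p = (∑ j, p j • ζ ^ (j : ℕ)) * g (Pi.single 0 1) := by
  have map_single (j : Fin n) : g (Pi.single j 1) = ζ ^ (j : ℕ) * g (Pi.single 0 1) := by
    rw [map_single_eq_iterate_of_map_shift hg, mul_left_iterate]
  calc g p = g (∑ j, p j • Pi.single j 1) := by rw [← pi_eq_sum_univ' p]
    _ = (∑ j, p j • ζ ^ (j : ℕ)) * g (Pi.single 0 1) := by
      simp only [map_sum, map_smul, Finset.sum_mul, smul_mul_assoc, ← map_single]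

end ShiftEquivariant

theorem geom_sum_eq_zero_of_pow_eq_one {K : Type*} [Ring K] [NoZeroDivisors K] {x : K} {n : ℕ}
    (hx : x ^ n = 1) (hx1 : x ≠ 1) : ∑ j ∈ Finset.range n, x ^ j = 0 := by
  have mul_sum : (x - 1) * ∑ j ∈ Finset.range n, x ^ j = 0 := by rw [mul_geom_sum, hx, sub_self]
  exact (mul_eq_zero.mp mul_sum).resolve_left (sub_ne_zero.mpr hx1)

theorem re_mul_self_of_norm_eq_one {z : ℂ} (hz : ‖z‖ = 1) : (z.re : ℂ) * z = (z ^ 2 + 1) / 2 := by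
  have conj_mul_self : (starRingEnd ℂ) z * z = 1 := by
    rw [Complex.conj_mul', hz, Complex.ofReal_one, one_pow]
  rw [Complex.re_eq_add_conj]
  linear_combination conj_mul_self / 2

theorem sum_re_pow_smul_pow {n : ℕ} [NeZero n] {ζ : ℂ} (hζ : ζ ^ n = 1) (hζ2 : ζ ^ 2 ≠ 1) :
    ∑ j : Fin n, (ζ ^ (j : ℕ)).re • ζ ^ (j : ℕ) = n / 2 := by
  have norm_pow_eq_one (j : ℕ) : ‖ζ ^ j‖ = 1 := by
    rw [norm_pow, Complex.norm_eq_one_of_pow_eq_one hζ (NeZero.ne n), one_pow]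
  have sum_sq_pow : ∑ j ∈ Finset.range n, (ζ ^ 2) ^ j = 0 :=
    geom_sum_eq_zero_of_pow_eq_one (by rw [pow_right_comm, hζ, one_pow]) hζ2
  calc ∑ j : Fin n, (ζ ^ (j : ℕ)).re • ζ ^ (j : ℕ)
      = ∑ j ∈ Finset.range n, ((ζ ^ 2) ^ j + 1) / 2 := by
        rw [Finset.sum_range]
        refine Finset.sum_congr rfl fun j _ => ?_
        rw [Complex.real_smul, re_mul_self_of_norm_eq_one (norm_pow_eq_one j), pow_right_comm]
    _ = n / 2 := by
        rw [← Finset.sum_div, Finset.sum_add_distrib, sum_sq_pow]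
        simp

theorem exp_two_pi_mul_I_div_pow (n j : ℕ) :
    Complex.exp (2 * π * Complex.I / n) ^ j = ⟨cos (2 * π * j / n), sin (2 * π * j / n)⟩ := by
  have angle : (j : ℂ) * (2 * π * Complex.I / n) = ((2 * π * j / n : ℝ) : ℂ) * Complex.I := by
    push_cast
    ring
  rw [← Complex.exp_nat_mul, angle]
  exact Complex.ext (Complex.exp_ofReal_mul_I_re _) (Complex.exp_ofReal_mul_I_im _)

theorem equivRealProdLm_symm_rotation (c s : ℝ) (v : ℝ × ℝ) :
    Complex.equivRealProdLm.symm (c * v.1 - s * v.2, s * v.1 + c * v.2) =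
      ⟨c, s⟩ * Complex.equivRealProdLm.symm v := by
  apply Complex.ext <;> simp [add_comm]

theorem map_eq_smul_sum_smul_pow_of_map_shift {n : ℕ} [NeZero n] {ζ : ℂ} (hζ : ζ ^ n = 1)
    (hζ2 : ζ ^ 2 ≠ 1) {g : (Fin n → ℝ) →ₗ[ℝ] ℂ}
    (hg : ∀ p : Fin n → ℝ, g (fun j => p (j - 1)) = ζ * g p)
    (hre : g (fun j => (ζ ^ (j : ℕ)).re) = 1) (p : Fin n → ℝ) :
    g p = (2 / (n : ℝ)) • ∑ j, p j • ζ ^ (j : ℕ) := by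
  have half_mul : (n / 2 : ℂ) * g (Pi.single 0 1) = 1 := by
    rw [← sum_re_pow_smul_pow hζ hζ2, ← map_eq_sum_smul_pow_mul_of_map_shift hg, hre]
  have map_single_zero : g (Pi.single 0 1) = 2 / n := by
    rw [eq_inv_of_mul_eq_one_right half_mul, inv_div]
  rw [map_eq_sum_smul_pow_mul_of_map_shift hg, map_single_zero, Complex.real_smul, mul_comm]
  push_cast
  rfl

/-- Any linear map `f : ℝⁿ → ℝ²` on support numbers of equiangular
hedgehogs that is equivariant under rotation by `2π/n` (cyclic shift of support
numbers) and under translations (`f(p + aC + bS) = f(p) + (a,b)`) is the vertex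
centroid: `f(p) = (2/n)·Σ_j p_j·(cos(2πj/n), sin(2πj/n))`. -/
theorem stmt_5 (n : ℕ) (hn : 3 ≤ n) [NeZero n]
    (f : (Fin n → ℝ) → ℝ × ℝ) (hlin : IsLinearMap ℝ f)
    (R : ℝ × ℝ → ℝ × ℝ)
    (hR : ∀ v : ℝ × ℝ, R v =
      (Real.cos (2 * Real.pi / n) * v.1 - Real.sin (2 * Real.pi / n) * v.2,
       Real.sin (2 * Real.pi / n) * v.1 + Real.cos (2 * Real.pi / n) * v.2))
    (C S : Fin n → ℝ)
    (hC : ∀ j : Fin n, C j = Real.cos (2 * Real.pi * (j : ℕ) / n))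
    (hS : ∀ j : Fin n, S j = Real.sin (2 * Real.pi * (j : ℕ) / n))
    (hrot : ∀ p : Fin n → ℝ, f (fun j => p (j - 1)) = R (f p))
    (htrans : ∀ (p : Fin n → ℝ) (a b : ℝ), f (p + a • C + b • S) = f p + (a, b)) :
    ∀ p : Fin n → ℝ, f p = (2 / (n : ℝ)) •
      ∑ j : Fin n, p j •
        ((Real.cos (2 * Real.pi * (j : ℕ) / n), Real.sin (2 * Real.pi * (j : ℕ) / n)) : ℝ × ℝ) := by
  intro p
  set ζ := Complex.exp (2 * π * Complex.I / n)
  have ζ_pow (j : ℕ) : ζ ^ j = ⟨cos (2 * π * j / n), sin (2 * π * j / n)⟩ :=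
    exp_two_pi_mul_I_div_pow n j
  have ζ_eq : ζ = ⟨cos (2 * π / n), sin (2 * π / n)⟩ := by simpa using ζ_pow 1
  have ζ_primitive : IsPrimitiveRoot ζ n := Complex.isPrimitiveRoot_exp n (NeZero.ne n)
  let e := Complex.equivRealProdLm
  let g : (Fin n → ℝ) →ₗ[ℝ] ℂ := e.symm.toLinearMap ∘ₗ hlin.mk' f
  have g_shift (q : Fin n → ℝ) : g (fun j => q (j - 1)) = ζ * g q := by
    rw [ζ_eq]
    exact (congrArg e.symm ((hrot q).trans (hR _))).trans (equivRealProdLm_symm_rotation _ _ _)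
  have C_eq : C = fun j : Fin n => (ζ ^ (j : ℕ)).re := funext fun j => by rw [hC, ζ_pow]
  have f_C : f C = (1, 0) := by simpa [hlin.map_zero] using htrans 0 1 0
  have g_C : g (fun j => (ζ ^ (j : ℕ)).re) = 1 := C_eq ▸ congrArg e.symm f_C
  have g_eq : g p = (2 / (n : ℝ)) • ∑ j, p j • ζ ^ (j : ℕ) :=
    map_eq_smul_sum_smul_pow_of_map_shift ζ_primitive.pow_eq_one
      (ζ_primitive.pow_ne_one_of_pos_of_lt two_ne_zero hn) g_shift g_C p
  calc f p = e (g p) := rfl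
    _ = (2 / (n : ℝ)) • ∑ j, p j • e (ζ ^ (j : ℕ)) := by rw [g_eq]; simp only [map_smul, map_sum]
    _ = _ := by simp only [ζ_pow]; rfl
end

section
/- Let n ≥ 3, let α_1, …, α_n ∈ ℝ (indices mod n) satisfy sin(α_{j+1} − α_j) ≠ 0 for all j, and let p_1, …, p_n ∈ ℝ. For each j let V_j be the unique common point of the lines ℓ(α_j, p_j) and ℓ(α_{j+1}, p_{j+1}). Set θ_{i−1/2} = α_i − α_{i−1} and θ_{i+1/2} = α_{i+1} − α_i. Then for every i with V_{i−1} ≠ V_i, the perpendicular bisector of the segment [V_{i−1}, V_i] is exactly the line ℓ(α_i + π/2, p*_i), where p*_i = (p_{i+1}·sin θ_{i−1/2} − p_{i−1}·sin θ_{i+1/2} + p_i·sin(θ_{i+1/2} − θ_{i−1/2})) / (2·sin θ_{i−1/2}·sin θ_{i+1/2}). Hence the sides of the perpendicular-bisector evolute of the polygon with sides ℓ(α_j, p_j) are the lines ℓ(α_j + π/2, p*_j). -/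
open Real

/-- The cooriented line with normal angle `α` and signed distance `p` from the origin. -/
def line (α p : ℝ) : Set (ℝ × ℝ) :=
  {x : ℝ × ℝ | x.1 * Real.cos α + x.2 * Real.sin α = p}

/-!
Only three consecutive sides, say `ℓ(α, p)`, `ℓ(β, q)` and `ℓ(γ, r)`, matter. Points of `ℓ(β, q)`
are determined by their coordinate in the direction `β + π/2`, so the perpendicular bisector of two
of them is the line of normal angle `β + π/2` at the average of their coordinates. The coordinate
of `ℓ(β, q) ∩ ℓ(γ, r)` comes from `e(γ) = cos (γ - β) e(β) + sin (γ - β) e(β + π/2)`, and likewise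
for `ℓ(α, p)`.
-/

/-- The inner product `⟨x, e(α)⟩`, that is, the coordinate of `x` in the direction `α`. Points of
`line α p` have `normalCoord α` equal to `p` and are distinguished by
`normalCoord (α + π / 2)`. -/
noncomputable def normalCoord (α : ℝ) (x : ℝ × ℝ) : ℝ :=
  x.1 * cos α + x.2 * sin α

theorem mem_line_iff {α p : ℝ} {x : ℝ × ℝ} : x ∈ line α p ↔ normalCoord α x = p :=
  Iff.rfl

theorem normalCoord_add (α θ : ℝ) (x : ℝ × ℝ) :
    normalCoord (α + θ) x =
      cos θ * normalCoord α x + sin θ * normalCoord (α + π / 2) x := by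
  simp only [normalCoord, cos_add, sin_add, cos_pi_div_two, sin_pi_div_two]
  ring

theorem sq_sub_add_sq_sub_eq_normalCoord (α : ℝ) (x y : ℝ × ℝ) :
    (x.1 - y.1) ^ 2 + (x.2 - y.2) ^ 2 =
      (normalCoord α x - normalCoord α y) ^ 2 +
        (normalCoord (α + π / 2) x - normalCoord (α + π / 2) y) ^ 2 := by
  simp only [normalCoord, cos_add_pi_div_two, sin_add_pi_div_two]
  linear_combination
    (-(x.1 - y.1) ^ 2 - (x.2 - y.2) ^ 2) * sin_sq_add_cos_sq α

theorem eq_of_normalCoord_eq {α : ℝ} {x y : ℝ × ℝ} (h : normalCoord α x = normalCoord α y)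
    (h' : normalCoord (α + π / 2) x = normalCoord (α + π / 2) y) : x = y := by
  have hdist : (x.1 - y.1) ^ 2 + (x.2 - y.2) ^ 2 = 0 := by
    rw [sq_sub_add_sq_sub_eq_normalCoord α, h, h']
    ring
  obtain ⟨h₁, h₂⟩ := (add_eq_zero_iff_of_nonneg (sq_nonneg _) (sq_nonneg _)).1 hdist
  exact Prod.ext (sub_eq_zero.1 (sq_eq_zero_iff.1 h₁)) (sub_eq_zero.1 (sq_eq_zero_iff.1 h₂))

theorem perpBisector_eq_line_of_mem_line {α p : ℝ} {A B : ℝ × ℝ} (hA : A ∈ line α p)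
    (hB : B ∈ line α p) (hAB : A ≠ B) :
    {x : ℝ × ℝ | (x.1 - A.1) ^ 2 + (x.2 - A.2) ^ 2 = (x.1 - B.1) ^ 2 + (x.2 - B.2) ^ 2} =
      line (α + π / 2) ((normalCoord (α + π / 2) A + normalCoord (α + π / 2) B) / 2) := by
  rw [mem_line_iff] at hA hB
  have hne : normalCoord (α + π / 2) A ≠ normalCoord (α + π / 2) B :=
    fun h ↦ hAB (eq_of_normalCoord_eq (hA.trans hB.symm) h)
  ext x
  rw [Set.mem_ofPred_eq, mem_line_iff, sq_sub_add_sq_sub_eq_normalCoord α x A,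
    sq_sub_add_sq_sub_eq_normalCoord α x B, hA, hB, add_right_inj, sq_eq_sq_iff_eq_or_eq_neg,
    sub_right_inj, or_iff_right hne]
  constructor <;> intro h <;> linarith

theorem normalCoord_add_pi_div_two_of_mem_line {α β p q : ℝ} {x : ℝ × ℝ} (hα : x ∈ line α p)
    (hβ : x ∈ line β q) (hsin : sin (β - α) ≠ 0) :
    normalCoord (α + π / 2) x = (q - p * cos (β - α)) / sin (β - α) := by
  rw [mem_line_iff] at hα hβ
  have hq := normalCoord_add α (β - α) x
  rw [add_sub_cancel, hα, hβ] at hq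
  rw [eq_div_iff hsin]
  linear_combination -hq

theorem stmt_6_general {α β γ p q r : ℝ} (hαβ : sin (β - α) ≠ 0) (hβγ : sin (γ - β) ≠ 0)
    {A B : ℝ × ℝ} (hA : A ∈ line α p ∧ A ∈ line β q) (hB : B ∈ line β q ∧ B ∈ line γ r)
    (hAB : A ≠ B) :
    {x : ℝ × ℝ | (x.1 - A.1) ^ 2 + (x.2 - A.2) ^ 2 = (x.1 - B.1) ^ 2 + (x.2 - B.2) ^ 2} =
      line (β + π / 2)
        ((r * sin (β - α) - p * sin (γ - β) + q * sin ((γ - β) - (β - α))) /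
          (2 * sin (β - α) * sin (γ - β))) := by
  have hβα : sin (α - β) ≠ 0 := by rwa [← neg_sub, sin_neg, neg_ne_zero]
  have hmid : (normalCoord (β + π / 2) A + normalCoord (β + π / 2) B) / 2 =
      (r * sin (β - α) - p * sin (γ - β) + q * sin ((γ - β) - (β - α))) /
        (2 * sin (β - α) * sin (γ - β)) := by
    rw [normalCoord_add_pi_div_two_of_mem_line hA.2 hA.1 hβα,
      normalCoord_add_pi_div_two_of_mem_line hB.1 hB.2 hβγ,
      ← neg_sub β α, sin_neg, cos_neg, sin_sub (γ - β)]
    field_simp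
    ring
  rw [perpBisector_eq_line_of_mem_line hA.2 hB.1 hAB, hmid]

/-- For a cooriented polygon with sides `ℓ(α_j, p_j)` and vertices
`V_j = ℓ(α_j,p_j) ∩ ℓ(α_{j+1},p_{j+1})`, the perpendicular bisector of the side
`[V_{i−1}, V_i]` (when the endpoints differ) is exactly the line
`ℓ(α_i + π/2, p*_i)` with
`p*_i = (p_{i+1} sin θ_{i−1/2} − p_{i−1} sin θ_{i+1/2} + p_i sin(θ_{i+1/2} − θ_{i−1/2}))
        / (2 sin θ_{i−1/2} sin θ_{i+1/2})`. -/
theorem stmt_6 (n : ℕ) (hn : 3 ≤ n) [NeZero n] (α p : Fin n → ℝ)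
    (hsin : ∀ j : Fin n, Real.sin (α (j + 1) - α j) ≠ 0)
    (V : Fin n → ℝ × ℝ)
    (hV : ∀ j : Fin n, V j ∈ line (α j) (p j) ∧ V j ∈ line (α (j + 1)) (p (j + 1))) :
    ∀ i : Fin n, V (i - 1) ≠ V i →
      {x : ℝ × ℝ |
          (x.1 - (V (i - 1)).1) ^ 2 + (x.2 - (V (i - 1)).2) ^ 2 =
          (x.1 - (V i).1) ^ 2 + (x.2 - (V i).2) ^ 2} =
        line (α i + Real.pi / 2)
          ((p (i + 1) * Real.sin (α i - α (i - 1)) -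
              p (i - 1) * Real.sin (α (i + 1) - α i) +
              p i * Real.sin ((α (i + 1) - α i) - (α i - α (i - 1)))) /
            (2 * Real.sin (α i - α (i - 1)) * Real.sin (α (i + 1) - α i))) := by
  exact fun i ↦ stmt_6_general (by simpa only [sub_add_cancel] using hsin (i - 1)) (hsin i)
    (by simpa only [sub_add_cancel] using hV (i - 1)) (hV i)
end

section
/- Let n ≥ 3, 0 ≤ m ≤ n−1, a, b ∈ ℝ, and consider the discrete hypocycloid of order m: the equiangular polygon whose j-th side is the line ℓ(2πj/n, p_j) with p_j = a·cos(2πmj/n) + b·sin(2πmj/n). Its perpendicular-bisector evolute has sides ℓ(2πj/n + π/2, p*_j) with p*_j = (p_{j+1} − p_{j−1})/(2·sin(2π/n)) (indices mod n), and for every j one has p*_j = (sin(2πm/n)/sin(2π/n)) · (−a·sin(m·(β_j − π/2)) + b·cos(m·(β_j − π/2))), where β_j = 2πj/n + π/2. Since the evolute of the smooth hypocycloid with support function h(β) = a·cos(mβ) + b·sin(mβ) has support function m·(−a·sin(m(β−π/2)) + b·cos(m(β−π/2))), every side of the P-evolute of the discrete hypocycloid is tangent to the evolute of h scaled by the factor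 sin(2πm/n)/(m·sin(2π/n)) about its center. -/
open Real

/-! Sampled at the normal angles `2πj/n`, a `2π`-periodic function turns cyclic shifts of the index
into translations of the angle by `2π/n`, so `p_{j+1} - p_{j-1}` is a central difference of the
support function. On the harmonics of order `m` a central difference with step `δ` acts as the
quarter turn `(a, b) ↦ (b, -a)` of the coefficients times `2 sin (mδ)`, just as differentiation
acts as that quarter turn times `m`. -/

section PeriodicSampling

variable {K α : Type*} [Field K] [CharZero K] {f : K → α} {c : K} {n : ℕ} [NeZero n]

theorem periodic_comp_mul_natCast_div (hf : Function.Periodic f c) :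
    Function.Periodic (fun k : ℕ => f (c * k / n)) n := by
  intro k
  have hn : (n : K) ≠ 0 := NeZero.ne _
  have hshift : c * ((k + n : ℕ) : K) / n = c * k / n + c := by
    push_cast
    field_simp
  simp only [hshift, hf (c * k / n)]

theorem periodic_apply_mul_val_add_div (hf : Function.Periodic f c) (i j : Fin n) :
    f (c * (i + j : Fin n).val / n) = f (c * i.val / n + c * j.val / n) := by
  rw [Fin.val_add, (periodic_comp_mul_natCast_div hf).map_mod_nat (i.val + j.val), Nat.cast_add,
    mul_add, add_div]

theorem periodic_apply_mul_val_sub_div (hf : Function.Periodic f c) (i j : Fin n) :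
    f (c * (i - j : Fin n).val / n) = f (c * i.val / n - c * j.val / n) := by
  -- Additivity at `(i - j) + j`, for the translate of `f` by the angle of `j`.
  have h := periodic_apply_mul_val_add_div (hf.sub_const (c * j.val / n)) (i - j) j
  rw [sub_add_cancel, add_sub_cancel_right] at h
  exact h.symm

end PeriodicSampling

/-- The support function `β ↦ a cos (mβ) + b sin (mβ)` of the smooth hypocycloid of order `m`.
The order is real; the function has period `2π` when `m` is an integer. -/
noncomputable def hypocycloidSupport (m a b β : ℝ) : ℝ :=
  a * cos (m * β) + b * sin (m * β)

theorem hypocycloidSupport_periodic (m : ℤ) (a b : ℝ) :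
    Function.Periodic (hypocycloidSupport m a b) (2 * π) := by
  intro β
  simp only [hypocycloidSupport, mul_add, cos_add_int_mul_two_pi, sin_add_int_mul_two_pi]

theorem hypocycloidSupport_add_sub_hypocycloidSupport_sub (m a b β δ : ℝ) :
    hypocycloidSupport m a b (β + δ) - hypocycloidSupport m a b (β - δ) =
      2 * sin (m * δ) * hypocycloidSupport m b (-a) β := by
  simp only [hypocycloidSupport, mul_add, mul_sub, cos_add, sin_add, cos_sub, sin_sub]
  ring

theorem stmt_9_general (n : ℕ) (m : ℤ) (hn : 3 ≤ n) [NeZero n] (a b : ℝ)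
    (p pstar : Fin n → ℝ)
    (hp : ∀ j : Fin n, p j = a * cos (2 * π * m * (j : ℕ) / n) + b * sin (2 * π * m * (j : ℕ) / n))
    (hps : ∀ j : Fin n, pstar j = (p (j + 1) - p (j - 1)) / (2 * sin (2 * π / n)))
    (β : Fin n → ℝ) (hβ : ∀ j : Fin n, β j = 2 * π * (j : ℕ) / n + π / 2) (j : Fin n) :
    pstar j = (sin (2 * π * m / n) / sin (2 * π / n)) *
      (-a * sin (m * (β j - π / 2)) + b * cos (m * (β j - π / 2))) := by
  have hsample (i : Fin n) : p i = hypocycloidSupport m a b (2 * π * i.val / n) := by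
    have hangle : 2 * π * m * i.val / n = m * (2 * π * i.val / n) := by ring
    rw [hp, hypocycloidSupport, hangle]
  have hperiodic := hypocycloidSupport_periodic m a b
  have hone : ((1 : Fin n) : ℕ) = 1 := by
    rw [Fin.val_one', Nat.mod_eq_of_lt (by lia)]
  have hnext : p (j + 1) = hypocycloidSupport m a b (2 * π * j.val / n + 2 * π / n) := by
    rw [hsample, periodic_apply_mul_val_add_div hperiodic, hone, Nat.cast_one, mul_one]
  have hprev : p (j - 1) = hypocycloidSupport m a b (2 * π * j.val / n - 2 * π / n) := by
    rw [hsample, periodic_apply_mul_val_sub_div hperiodic, hone, Nat.cast_one, mul_one]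
  have hstep : 2 * π * m / n = m * (2 * π / n) := by ring
  rw [hps, hnext, hprev, hypocycloidSupport_add_sub_hypocycloidSupport_sub, hypocycloidSupport,
    hβ, add_sub_cancel_right, hstep]
  ring

/-- The perpendicular-bisector evolute of the discrete hypocycloid
of order `m` with support numbers `p_j = a cos(2πmj/n) + b sin(2πmj/n)` has support
numbers `p*_j = (p_{j+1} − p_{j−1})/(2 sin(2π/n))`, and these satisfy
`p*_j = (sin(2πm/n)/sin(2π/n))·(−a sin(m(β_j − π/2)) + b cos(m(β_j − π/2)))` with
`β_j = 2πj/n + π/2`: every side of the evolute is tangent to the evolute of the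
smooth hypocycloid scaled by `sin(2πm/n)/(m sin(2π/n))`. -/
theorem stmt_9 (n m : ℕ) (hn : 3 ≤ n) (hm : m ≤ n - 1) [NeZero n] (a b : ℝ)
    (p pstar : Fin n → ℝ)
    (hp : ∀ j : Fin n, p j =
      a * Real.cos (2 * Real.pi * m * (j : ℕ) / n) + b * Real.sin (2 * Real.pi * m * (j : ℕ) / n))
    (hps : ∀ j : Fin n, pstar j = (p (j + 1) - p (j - 1)) / (2 * Real.sin (2 * Real.pi / n)))
    (β : Fin n → ℝ)
    (hβ : ∀ j : Fin n, β j = 2 * Real.pi * (j : ℕ) / n + Real.pi / 2) :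
    ∀ j : Fin n, pstar j =
      (Real.sin (2 * Real.pi * m / n) / Real.sin (2 * Real.pi / n)) *
        (-a * Real.sin (m * (β j - Real.pi / 2)) + b * Real.cos (m * (β j - Real.pi / 2))) := by
  exact_mod_cast stmt_9_general n m hn a b p pstar (by exact_mod_cast hp) hps β hβ
end

section
/- Let n ≥ 1 and let A be an n×n complex matrix such that Tr(A^k) = 0 for every odd k with 1 ≤ k ≤ n. Then the characteristic polynomial χ_A of A satisfies χ_A(−X) = (−1)ⁿ·χ_A(X); equivalently, the spectrum of A is symmetric with respect to the origin, with opposite eigenvalues having equal algebraic multiplicities. -/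
open Polynomial

/-!
Write `χ = ∑ cᵢ Xⁱ` for the characteristic polynomial of an `N × N` matrix `A`. Over the matrix
ring, `adj(X - A)` is the quotient of `χ` by the monic polynomial `X - A`, so its coefficients are
`∑_{i > m} cᵢ A^(i-m-1)`; by Jacobi's formula its trace is `χ'`. Comparing coefficients gives
Newton's identities `m cₘ = ∑_{i ≥ m} cᵢ tr(A^(i-m))` over any commutative ring. The term `i = m` is
`N cₘ`. If `N - m` is odd, then each `i > m` has either `i - m` odd, so that the trace vanishes, or
`N - i` odd, so that `cᵢ = 0` by descending induction. Hence `(N - m) cₘ = 0`, and `cₘ = 0` since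
odd integers up to `N` are not zero divisors; only the `Xᵐ` with `m ≡ N mod 2` survive in `χ`.
-/

section Newton

variable {ι R : Type*} [Fintype ι] [DecidableEq ι] [CommRing R]

theorem derivative_det (M : Matrix ι ι R[X]) :
    derivative M.det = (M.adjugate * M.map derivative).trace := by
  have prod_updateCol (σ : Equiv.Perm ι) (i : ι) :
      ∏ j, M.updateCol i (fun k ↦ derivative (M k i)) (σ j) j =
        (∏ j ∈ Finset.univ.erase i, M (σ j) j) * derivative (M (σ i) i) := by
    rw [← Finset.prod_erase_mul _ _ (Finset.mem_univ i), Matrix.updateCol_self]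
    congr 1
    exact Finset.prod_congr rfl fun j hj ↦ Matrix.updateCol_ne (Finset.ne_of_mem_erase hj)
  calc derivative M.det
      = ∑ i, (M.updateCol i fun k ↦ derivative (M k i)).det := by
        simp only [Matrix.det_apply, derivative_sum, derivative_smul, derivative_prod_finset,
          prod_updateCol, Finset.smul_sum, Units.smul_def]
        exact Finset.sum_comm
    _ = ∑ i, (M.adjugate.mulVec fun k ↦ derivative (M k i)) i := by
        simp only [← Matrix.cramer_apply, Matrix.cramer_eq_adjugate_mulVec]
    _ = (M.adjugate * M.map derivative).trace := rfl

theorem derivative_charpoly (A : Matrix ι ι R) :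
    derivative A.charpoly = A.charmatrix.adjugate.trace := by
  have map_derivative_charmatrix : A.charmatrix.map derivative = 1 := by
    ext1 i j
    rcases eq_or_ne i j with rfl | hij
    · simp
    · simp [hij]
  rw [Matrix.charpoly, derivative_det, map_derivative_charmatrix, mul_one]

theorem map_charpoly_divByMonic_X_sub_C (A : Matrix ι ι R) :
    A.charpoly.map (algebraMap R (Matrix ι ι R)) /ₘ (X - C A) =
      matPolyEquiv A.charmatrix.adjugate := by
  nontriviality Matrix ι ι R
  refine (div_modByMonic_unique _ 0 (monic_X_sub_C A) ⟨?_, ?_⟩).1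
  · rw [zero_add, ← Matrix.matPolyEquiv_charmatrix, ← map_mul, Matrix.mul_adjugate,
      matPolyEquiv_smul_one, Matrix.charpoly]
  · simp

theorem coeff_trace_adjugate_charmatrix (A : Matrix ι ι R) (m : ℕ) :
    A.charmatrix.adjugate.trace.coeff m =
      ∑ i ∈ Finset.Icc (m + 1) (Fintype.card ι),
        A.charpoly.coeff i * (A ^ (i - (m + 1))).trace := by
  nontriviality R
  cases isEmpty_or_nonempty ι
  · simp
  calc A.charmatrix.adjugate.trace.coeff m
      = ((matPolyEquiv A.charmatrix.adjugate).coeff m).trace := by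
        simp only [Matrix.trace, Matrix.diag_apply, finsetSum_coeff, matPolyEquiv_coeff_apply]
    _ = _ := by
        rw [← map_charpoly_divByMonic_X_sub_C, coeff_divByMonic_X_sub_C,
          A.charpoly_monic.natDegree_map, A.charpoly_natDegree_eq_dim, Matrix.trace_sum]
        simp only [coeff_map, ← Algebra.commutes, ← Algebra.smul_def, Matrix.trace_smul,
          smul_eq_mul]

theorem natCast_mul_coeff_charpoly (A : Matrix ι ι R) (m : ℕ) :
    m * A.charpoly.coeff m =
      ∑ i ∈ Finset.Icc m (Fintype.card ι), A.charpoly.coeff i * (A ^ (i - m)).trace := by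
  cases m with
  | zero =>
    nontriviality R
    have trace_aeval_self := congrArg Matrix.trace A.aeval_self_charpoly
    rw [aeval_eq_sum_range, A.charpoly_natDegree_eq_dim, Matrix.trace_sum,
      Nat.range_succ_eq_Icc_zero] at trace_aeval_self
    simpa using trace_aeval_self.symm
  | succ m =>
    rw [← coeff_trace_adjugate_charmatrix, ← derivative_charpoly, coeff_derivative, mul_comm,
      Nat.cast_succ]

theorem card_sub_mul_coeff_charpoly (A : Matrix ι ι R) {m : ℕ} (hm : m ≤ Fintype.card ι) :
    ((Fintype.card ι - m : ℕ) : R) * A.charpoly.coeff m =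
      -∑ i ∈ Finset.Ioc m (Fintype.card ι), A.charpoly.coeff i * (A ^ (i - m)).trace := by
  have newton := natCast_mul_coeff_charpoly A m
  rw [← Finset.add_sum_Ioc_eq_sum_Icc hm, Nat.sub_self, pow_zero, Matrix.trace_one] at newton
  rw [Nat.cast_sub hm]
  linear_combination -newton

end Newton

section Parity

theorem comp_neg_X_eq_neg_one_pow_mul {R : Type*} [Ring R] {p : R[X]} {n : ℕ}
    (hp : ∀ m, Odd (n + m) → p.coeff m = 0) : p.comp (-X) = (-1) ^ n * p := by
  ext m
  have neg_X : (-X : R[X]) = C (-1) * X := by simp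
  have neg_one_pow : ((-1) ^ n : R[X]) = C ((-1) ^ n) := by simp
  rw [neg_X, neg_one_pow, comp_C_mul_X_coeff, coeff_C_mul,
    ← ((Commute.neg_one_left (p.coeff m)).pow_left m).eq]
  rcases Nat.even_or_odd (n + m) with h_even | h_odd
  · rw [neg_one_pow_congr (Nat.even_add.mp h_even)]
  · rw [hp m h_odd, mul_zero, mul_zero]

variable {ι R : Type*} [Fintype ι] [DecidableEq ι] [CommRing R]

theorem coeff_charpoly_eq_zero_of_odd {A : Matrix ι ι R}
    (hR : ∀ k : ℕ, Odd k → k ≤ Fintype.card ι → (k : R) ∈ nonZeroDivisors R)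
    (hA : ∀ k : ℕ, Odd k → k ≤ Fintype.card ι → (A ^ k).trace = 0)
    (m : ℕ) (hm : Odd (Fintype.card ι + m)) : A.charpoly.coeff m = 0 := by
  nontriviality R
  rcases lt_or_ge (Fintype.card ι) m with h_lt | h_le
  · exact coeff_eq_zero_of_natDegree_lt (A.charpoly_natDegree_eq_dim.trans_lt h_lt)
  induction hd : Fintype.card ι - m using Nat.strong_induction_on generalizing m with
  | _ d ih =>
    have sum_eq_zero : ∑ i ∈ Finset.Ioc m (Fintype.card ι),
        A.charpoly.coeff i * (A ^ (i - m)).trace = 0 := by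
      refine Finset.sum_eq_zero fun i hi ↦ ?_
      obtain ⟨hmi, hi⟩ := Finset.mem_Ioc.mp hi
      rcases Nat.even_or_odd (i - m) with h_even | h_odd
      · rw [ih (Fintype.card ι - i) (by omega) i (by grind) hi rfl, zero_mul]
      · rw [hA _ h_odd (by omega), mul_zero]
    have sub_mem := hR (Fintype.card ι - m) (by grind) (Nat.sub_le _ _)
    rw [← mul_left_mem_nonZeroDivisors_eq_zero_iff sub_mem, card_sub_mul_coeff_charpoly A h_le,
      sum_eq_zero, neg_zero]

theorem stmt_15_general (A : Matrix ι ι R)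
    (hR : ∀ k : ℕ, Odd k → k ≤ Fintype.card ι → (k : R) ∈ nonZeroDivisors R)
    (hA : ∀ k : ℕ, Odd k → k ≤ Fintype.card ι → (A ^ k).trace = 0) :
    A.charpoly.comp (-X) = (-1) ^ Fintype.card ι * A.charpoly :=
  comp_neg_X_eq_neg_one_pow_mul (coeff_charpoly_eq_zero_of_odd hR hA)

end Parity

/-- If an `n×n` complex matrix `A` satisfies `Tr(A^k) = 0` for all
odd `k` with `1 ≤ k ≤ n`, then its characteristic polynomial satisfies
`χ_A(−X) = (−1)ⁿ χ_A(X)`: the spectrum of `A` is symmetric with respect to the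
origin, with opposite eigenvalues of equal algebraic multiplicities. -/
theorem stmt_15 (n : ℕ) (hn : 1 ≤ n) (A : Matrix (Fin n) (Fin n) ℂ)
    (h : ∀ k : ℕ, Odd k → 1 ≤ k → k ≤ n → Matrix.trace (A ^ k) = 0) :
    (Matrix.charpoly A).comp (-Polynomial.X) = (-1) ^ n * Matrix.charpoly A := by
  simpa using stmt_15_general A
    (fun k hk _ ↦ mem_nonZeroDivisors_of_ne_zero (Nat.cast_ne_zero.mpr hk.pos.ne'))
    (fun k hk hkn ↦ h k hk hk.pos (by simpa using hkn))
end
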